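/- Let f : ℝ^d → ℝ be differentiable, μ-strongly convex on ℝ^d with ∇f L-Lipschitz on ℝ^d, where 0 < μ ≤ L, and let x* be its (unique) minimizer with f* = f(x*), x⁰ ≠ x*. Let (x^k) and (λ_k) be generated by the modified adaptive gradient descent: λ₀ > 0, x¹ = x⁰ − λ₀∇f(x⁰), λ₁ = ‖x¹ − x⁰‖/(2‖∇f(x¹) − ∇f(x⁰)‖), and for k ≥ 2, λ_k = min{√(1 + θ_{k−1}/2)·λ_{k−1}, ‖x^k − x^{k−1}‖/(2‖∇f(x^k) − ∇f(x^{k−1})‖)} (with the second candidate omitted if ∇f(x^k) = ∇f(x^{k−1})), θ_k = λ_k/λ_{k−1}, and x^{k+1} = x^k − λ_k∇f(x^k). Define Ψ^{k+1} = ‖x^{k+1} − x*‖² + (1/2)(1 + 2μ/L)‖x^{k+1} − x^k‖² + 2λ_k(1+θ_k)(f(x^k) − f*). Then for all k ≥ 3, ‖x^{k+1} − x*‖² ≤ Ψ^{k+1} ≤ (1 − μ/(4L))^{k−2}·Ψ³. -/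

import Mathlib

open scoped RealInnerProductSpace

/-- The energy `Ψ^k = ‖x^k − x*‖² + (1/2)(1 + 2μ/L)‖x^k − x^{k−1}‖²
  + 2λ_{k−1}(1 + θ_{k−1})(f(x^{k−1}) − f*)` from the strongly convex analysis. -/
noncomputable def adgdPsi {d : ℕ} (f : EuclideanSpace ℝ (Fin d) → ℝ)
    (xstar : EuclideanSpace ℝ (Fin d)) (x : ℕ → EuclideanSpace ℝ (Fin d))
    (lam : ℕ → ℝ) (mu L : ℝ) (k : ℕ) : ℝ :=
  ‖x k - xstar‖ ^ 2 + (1 / 2) * (1 + 2 * mu / L) * ‖x k - x (k - 1)‖ ^ 2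
    + 2 * lam (k - 1) * (1 + lam (k - 1) / lam (k - 2)) * (f (x (k - 1)) - f xstar)

/-!
Expanding `‖x^{k+1} - x*‖²` leaves a term `‖x^{k+1} - x^k‖²`. The rule `2λ_k‖∇f(x^k) - ∇f(x^{k-1})‖
≤ ‖x^k - x^{k-1}‖` bounds it by half of the previous displacement plus a telescoping multiple of
`f(x^{k-1}) - f(x^k)`, and the rule `λ_k² ≤ (1 + θ_{k-1}/2)λ_{k-1}²` makes the multiple compatible
with the last term of the energy, without any descent of `f`. Strong convexity and smoothness
confine the stepsizes to `[1/(2L), 1/(2μ)]`. Averaging the strong convexity inequality at `x*` with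
the cocoercivity inequality then contracts the distance term by `1 - μ/(4L)` and pays for the
surplus `(μ/L)‖x^{k+1} - x^k‖²` in the energy. The other two terms contract because `1 ≤ (1 -
μ/(4L))(1 + 2μ/L)` and `1 + θ/2 ≤ (1 - μ/(4L))(1 + θ)` for `μ/L ≤ θ`.
-/

section InnerProduct

variable {E : Type*} [NormedAddCommGroup E] [InnerProductSpace ℝ E]
  {f : E → ℝ} {f' : E → E} {mu : ℝ}

lemma add_inner_le_of_strongConvex (hmu : 0 ≤ mu)
    (hsc : ∀ x y, f x + ⟪f' x, y - x⟫ + mu / 2 * ‖y - x‖ ^ 2 ≤ f y) (x y : E) :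
    f x + ⟪f' x, y - x⟫ ≤ f y :=
  (le_add_of_nonneg_right (by positivity)).trans (hsc x y)

lemma mul_norm_sub_sq_le_inner_of_strongConvex
    (hsc : ∀ x y, f x + ⟪f' x, y - x⟫ + mu / 2 * ‖y - x‖ ^ 2 ≤ f y) (x y : E) :
    mu * ‖x - y‖ ^ 2 ≤ ⟪f' x - f' y, x - y⟫ := by
  have hxy := hsc x y
  have hyx := hsc y x
  rw [← neg_sub x y, inner_neg_right, norm_neg] at hxy
  rw [inner_sub_left]
  linarith

lemma mul_norm_sub_le_norm_sub_of_strongConvex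
    (hsc : ∀ x y, f x + ⟪f' x, y - x⟫ + mu / 2 * ‖y - x‖ ^ 2 ≤ f y) (x y : E) :
    mu * ‖x - y‖ ≤ ‖f' x - f' y‖ := by
  rcases (norm_nonneg (x - y)).eq_or_lt with hxy | hxy
  · simp [← hxy]
  · refine le_of_mul_le_mul_right ?_ hxy
    calc mu * ‖x - y‖ * ‖x - y‖ = mu * ‖x - y‖ ^ 2 := by ring
      _ ≤ ⟪f' x - f' y, x - y⟫ := mul_norm_sub_sq_le_inner_of_strongConvex hsc x y
      _ ≤ ‖f' x - f' y‖ * ‖x - y‖ := real_inner_le_norm _ _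

lemma injective_of_strongConvex (hmu : 0 < mu)
    (hsc : ∀ x y, f x + ⟪f' x, y - x⟫ + mu / 2 * ‖y - x‖ ^ 2 ≤ f y) :
    Function.Injective f' := by
  intro x y hxy
  have hle := mul_norm_sub_le_norm_sub_of_strongConvex hsc x y
  rw [hxy, sub_self, norm_zero] at hle
  exact sub_eq_zero.1 (norm_le_zero_iff.1 (nonpos_of_mul_nonpos_right hle hmu))

lemma three_halves_mul_sq_norm_le {g h : E} {l r : ℝ} (hl : 0 ≤ l) (hr : 2 * l * ‖g - h‖ ≤ r) :
    3 / 2 * (l ^ 2 * ‖g‖ ^ 2) ≤ 1 / 2 * r ^ 2 + 2 * l ^ 2 * ⟪g, h⟫ := by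
  have hcross : 2 * l ^ 2 * ⟪g - h, g⟫ ≤ 1 / 2 * r ^ 2 + 1 / 2 * (l * ‖g‖) ^ 2 :=
    calc 2 * l ^ 2 * ⟪g - h, g⟫ ≤ 2 * l ^ 2 * (‖g - h‖ * ‖g‖) := by
          gcongr
          exact real_inner_le_norm _ _
      _ = 2 * l * ‖g - h‖ * (l * ‖g‖) := by ring
      _ ≤ r * (l * ‖g‖) := by gcongr
      _ ≤ 1 / 2 * r ^ 2 + 1 / 2 * (l * ‖g‖) ^ 2 := by linarith [two_mul_le_add_sq r (l * ‖g‖)]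
  rw [inner_sub_left, real_inner_self_eq_norm_sq, real_inner_comm] at hcross
  linarith

end InnerProduct

section Gradient

variable {E : Type*} [NormedAddCommGroup E] [InnerProductSpace ℝ E] [CompleteSpace E]
  {f : E → ℝ} {f' : E → E} {L : ℝ}

lemma eq_zero_of_isLocalMin_of_hasGradientAt {g x : E} (hmin : IsLocalMin f x)
    (hg : HasGradientAt f g x) : g = 0 := by
  simpa using hmin.hasFDerivAt_eq_zero hg.hasFDerivAt

lemma hasDerivAt_comp_line_of_hasGradientAt {g x v : E} {t : ℝ}
    (hg : HasGradientAt f g (x + t • v)) :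
    HasDerivAt (fun s : ℝ => f (x + s • v)) ⟪g, v⟫ t := by
  have hline : HasDerivAt (fun s : ℝ => x + s • v) v t := by
    simpa using ((hasDerivAt_id t).smul_const v).const_add x
  exact (hg.hasFDerivAt.comp_hasDerivAt t hline).congr_deriv (by simp)

lemma le_add_inner_add_sq_of_lipschitz_gradient (hgrad : ∀ x, HasGradientAt f (f' x) x)
    (hLip : ∀ x y, ‖f' x - f' y‖ ≤ L * ‖x - y‖) (x v : E) :
    f (x + v) ≤ f x + ⟪f' x, v⟫ + L / 2 * ‖v‖ ^ 2 := by
  have hf (t : ℝ) : HasDerivAt (fun t : ℝ => f (x + t • v)) ⟪f' (x + t • v), v⟫ t :=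
    hasDerivAt_comp_line_of_hasGradientAt (hgrad _)
  have hquad (t : ℝ) : HasDerivAt (fun t : ℝ => f x + ⟪f' x, v⟫ * t + L / 2 * ‖v‖ ^ 2 * t ^ 2)
      (⟪f' x, v⟫ + L * t * ‖v‖ ^ 2) t := by
    refine ((((hasDerivAt_id t).const_mul ⟪f' x, v⟫).const_add (f x)).add
      (((hasDerivAt_id t).pow 2).const_mul (L / 2 * ‖v‖ ^ 2))).congr_deriv ?_
    simp only [id]
    ring
  have hslope (t : ℝ) (ht : 0 ≤ t) :
      ⟪f' (x + t • v), v⟫ ≤ ⟪f' x, v⟫ + L * t * ‖v‖ ^ 2 := by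
    rw [← sub_le_iff_le_add', ← inner_sub_left]
    calc ⟪f' (x + t • v) - f' x, v⟫ ≤ ‖f' (x + t • v) - f' x‖ * ‖v‖ := real_inner_le_norm _ _
      _ ≤ L * ‖x + t • v - x‖ * ‖v‖ := by
          gcongr
          exact hLip _ _
      _ = L * t * ‖v‖ ^ 2 := by
          rw [add_sub_cancel_left, norm_smul, Real.norm_of_nonneg ht]
          ring
  have hle := image_le_of_deriv_right_le_deriv_boundary (a := (0 : ℝ)) (b := 1)
    (fun t _ => (hf t).continuousAt.continuousWithinAt) (fun t _ => (hf t).hasDerivWithinAt)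
    (by simp) (fun t _ => (hquad t).continuousAt.continuousWithinAt)
    (fun t _ => (hquad t).hasDerivWithinAt) (fun t ht => hslope t ht.1)
    (Set.right_mem_Icc.2 zero_le_one)
  simpa using hle

lemma add_inner_add_sq_norm_sub_le_of_lipschitz_gradient (hL : 0 < L)
    (hgrad : ∀ x, HasGradientAt f (f' x) x) (hconv : ∀ x y, f x + ⟪f' x, y - x⟫ ≤ f y)
    (hLip : ∀ x y, ‖f' x - f' y‖ ≤ L * ‖x - y‖) (x y : E) :
    f x + ⟪f' x, y - x⟫ + ‖f' y - f' x‖ ^ 2 / (2 * L) ≤ f y := by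
  -- The test point `y - L⁻¹ • g` minimizes the quadratic upper model at `y` minus the linear
  -- lower model at `x`.
  set g := f' y - f' x with hg
  have hupper := le_add_inner_add_sq_of_lipschitz_gradient hgrad hLip y (-(L⁻¹ • g))
  have hlower := hconv x (y + -(L⁻¹ • g))
  rw [add_sub_right_comm, inner_add_right, inner_neg_right, real_inner_smul_right] at hlower
  rw [inner_neg_right, real_inner_smul_right, norm_neg, norm_smul, mul_pow, norm_inv,
    Real.norm_of_nonneg hL.le] at hupper
  have hinner : ⟪f' y, g⟫ - ⟪f' x, g⟫ = ‖g‖ ^ 2 := by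
    rw [← inner_sub_left, ← hg, real_inner_self_eq_norm_sq]
  have hinner' : L⁻¹ * ⟪f' y, g⟫ - L⁻¹ * ⟪f' x, g⟫ = L⁻¹ * ‖g‖ ^ 2 := by
    rw [← mul_sub, hinner]
  have hcoeff : L / 2 * (L⁻¹ ^ 2 * ‖g‖ ^ 2) = L⁻¹ * ‖g‖ ^ 2 - ‖g‖ ^ 2 / (2 * L) := by
    field_simp
    ring
  linarith

end Gradient

section Algorithm

/-- The stepsize candidate `‖y - z‖ / (2‖f' y - f' z‖)`: half the inverse of the Lipschitz
constant of `f'` observed between `y` and `z`. It has the junk value `0` if `f' y = f' z`. -/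
noncomputable def localStepsize {E : Type*} [NormedAddCommGroup E] (f' : E → E) (y z : E) : ℝ :=
  ‖y - z‖ / (2 * ‖f' y - f' z‖)

lemma one_div_two_mul_le_localStepsize {E : Type*} [NormedAddCommGroup E] {f' : E → E} {L : ℝ}
    (hL : 0 < L) {y z : E} (hLip : ‖f' y - f' z‖ ≤ L * ‖y - z‖) (hyz : f' y ≠ f' z) :
    1 / (2 * L) ≤ localStepsize f' y z := by
  have hpos : 0 < ‖f' y - f' z‖ := norm_sub_pos_iff.2 hyz
  rw [localStepsize, div_le_div_iff₀ (by positivity) (by positivity)]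
  linarith

lemma localStepsize_le_one_div_two_mul {E : Type*} [NormedAddCommGroup E] {f' : E → E} {mu : ℝ}
    (hmu : 0 < mu) {y z : E} (hexp : mu * ‖y - z‖ ≤ ‖f' y - f' z‖) :
    localStepsize f' y z ≤ 1 / (2 * mu) := by
  refine div_le_of_le_mul₀ (by positivity) (by positivity) ?_
  rw [one_div_mul_eq_div, le_div_iff₀ (by positivity)]
  linarith

/-- The modified adaptive gradient descent for the gradient field `f'`: the iterates `x` and the
stepsizes `lam` satisfy the update rule and the two-candidate stepsize rule, in which
`√(1 + θ/2) * lam` is the only candidate if the last two gradients agree. -/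
structure IsAdaptiveGradientDescent {E : Type*} [NormedAddCommGroup E] [NormedSpace ℝ E]
    (f' : E → E) (x : ℕ → E) (lam : ℕ → ℝ) : Prop where
  lam_zero_pos : 0 < lam 0
  update : ∀ n, x (n + 1) = x n - lam n • f' (x n)
  lam_one : lam 1 = localStepsize f' (x 1) (x 0)
  lam_add_two_of_ne : ∀ n, f' (x (n + 2)) ≠ f' (x (n + 1)) →
    lam (n + 2) = min (√(1 + lam (n + 1) / lam n / 2) * lam (n + 1))
      (localStepsize f' (x (n + 2)) (x (n + 1)))
  lam_add_two_of_eq : ∀ n, f' (x (n + 2)) = f' (x (n + 1)) →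
    lam (n + 2) = √(1 + lam (n + 1) / lam n / 2) * lam (n + 1)

namespace IsAdaptiveGradientDescent

variable {E : Type*} [NormedAddCommGroup E] [NormedSpace ℝ E]
  {f' : E → E} {x : ℕ → E} {lam : ℕ → ℝ} {L : ℝ}

lemma norm_succ_sub_sq (h : IsAdaptiveGradientDescent f' x lam) (n : ℕ) :
    ‖x (n + 1) - x n‖ ^ 2 = lam n ^ 2 * ‖f' (x n)‖ ^ 2 := by
  rw [h.update, sub_sub_cancel_left, norm_neg, norm_smul, mul_pow, Real.norm_eq_abs, sq_abs]

lemma succ_eq_of_gradient_eq_zero (h : IsAdaptiveGradientDescent f' x lam) {n : ℕ}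
    (hn : f' (x n) = 0) : x (n + 1) = x n := by
  rw [h.update, hn, smul_zero, sub_zero]

lemma gradient_eq_zero_of_succ_eq (h : IsAdaptiveGradientDescent f' x lam) {n : ℕ}
    (hlam : 0 < lam n) (hn : x (n + 1) = x n) : f' (x n) = 0 := by
  rw [h.update, sub_eq_self] at hn
  exact (smul_eq_zero.1 hn).resolve_left hlam.ne'

lemma lam_succ_le_localStepsize (h : IsAdaptiveGradientDescent f' x lam) {n : ℕ}
    (hn : f' (x (n + 1)) ≠ f' (x n)) : lam (n + 1) ≤ localStepsize f' (x (n + 1)) (x n) := by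
  cases n with
  | zero => exact h.lam_one.le
  | succ n => exact (h.lam_add_two_of_ne n hn).trans_le (min_le_right _ _)

lemma two_mul_lam_mul_norm_gradient_sub_le (h : IsAdaptiveGradientDescent f' x lam) (n : ℕ) :
    2 * lam (n + 1) * ‖f' (x (n + 1)) - f' (x n)‖ ≤ ‖x (n + 1) - x n‖ := by
  by_cases hn : f' (x (n + 1)) = f' (x n)
  · simp [hn]
  · have hpos : 0 < ‖f' (x (n + 1)) - f' (x n)‖ := norm_sub_pos_iff.2 hn
    have hle := h.lam_succ_le_localStepsize hn
    rw [localStepsize, le_div_iff₀ (by positivity)] at hle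
    linarith

lemma lam_add_two_le_sqrt_mul (h : IsAdaptiveGradientDescent f' x lam) (n : ℕ) :
    lam (n + 2) ≤ √(1 + lam (n + 1) / lam n / 2) * lam (n + 1) := by
  by_cases hn : f' (x (n + 2)) = f' (x (n + 1))
  · exact (h.lam_add_two_of_eq n hn).le
  · exact (h.lam_add_two_of_ne n hn).trans_le (min_le_left _ _)

lemma lam_add_two_sq_le (h : IsAdaptiveGradientDescent f' x lam) (hlam : ∀ n, 0 < lam n) (n : ℕ) :
    lam (n + 2) ^ 2 ≤ (1 + lam (n + 1) / lam n / 2) * lam (n + 1) ^ 2 := by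
  have h₀ := hlam n
  have h₁ := hlam (n + 1)
  calc lam (n + 2) ^ 2 ≤ (√(1 + lam (n + 1) / lam n / 2) * lam (n + 1)) ^ 2 := by
        have h₂ := hlam (n + 2)
        gcongr
        exact h.lam_add_two_le_sqrt_mul n
    _ = (1 + lam (n + 1) / lam n / 2) * lam (n + 1) ^ 2 := by
        rw [mul_pow, Real.sq_sqrt (by positivity)]

lemma lam_pos_and_one_div_le_lam_succ (h : IsAdaptiveGradientDescent f' x lam) (hL : 0 < L)
    (hLip : ∀ x y, ‖f' x - f' y‖ ≤ L * ‖x - y‖) (h10 : f' (x 1) ≠ f' (x 0)) (n : ℕ) :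
    0 < lam n ∧ 1 / (2 * L) ≤ lam (n + 1) := by
  induction n with
  | zero =>
    rw [zero_add, h.lam_one]
    exact ⟨h.lam_zero_pos, one_div_two_mul_le_localStepsize hL (hLip _ _) h10⟩
  | succ n ih =>
    obtain ⟨hn, hlow⟩ := ih
    have hpos : 0 < lam (n + 1) := lt_of_lt_of_le (by positivity) hlow
    have hsqrt : 1 / (2 * L) ≤ √(1 + lam (n + 1) / lam n / 2) * lam (n + 1) := by
      have hone : 1 ≤ √(1 + lam (n + 1) / lam n / 2) :=
        Real.one_le_sqrt.2 (le_add_of_nonneg_right (by positivity))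
      exact hlow.trans (le_mul_of_one_le_left hpos.le hone)
    refine ⟨hpos, ?_⟩
    by_cases hg : f' (x (n + 2)) = f' (x (n + 1))
    · exact hsqrt.trans_eq (h.lam_add_two_of_eq n hg).symm
    · rw [h.lam_add_two_of_ne n hg]
      exact le_min hsqrt (one_div_two_mul_le_localStepsize hL (hLip _ _) hg)

end IsAdaptiveGradientDescent

lemma IsAdaptiveGradientDescent.three_halves_mul_norm_succ_sub_sq_le {E : Type*}
    [NormedAddCommGroup E] [InnerProductSpace ℝ E] {f : E → ℝ} {f' : E → E} {x : ℕ → E}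
    {lam : ℕ → ℝ} (h : IsAdaptiveGradientDescent f' x lam) (hlam : ∀ n, 0 < lam n)
    (hconv : ∀ x y, f x + ⟪f' x, y - x⟫ ≤ f y) (n : ℕ) :
    3 / 2 * ‖x (n + 2) - x (n + 1)‖ ^ 2 ≤ 1 / 2 * ‖x (n + 1) - x n‖ ^ 2 +
      2 * (lam (n + 1) * (lam (n + 1) / lam n)) * (f (x n) - f (x (n + 1))) := by
  have h₀ := hlam n
  have h₁ := hlam (n + 1)
  have hinner : lam n * ⟪f' (x (n + 1)), f' (x n)⟫ ≤ f (x n) - f (x (n + 1)) := by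
    have hstep : x n - x (n + 1) = lam n • f' (x n) := by rw [h.update, sub_sub_cancel]
    have hle := hconv (x (n + 1)) (x n)
    rw [hstep, real_inner_smul_right] at hle
    linarith
  calc 3 / 2 * ‖x (n + 2) - x (n + 1)‖ ^ 2
      ≤ 1 / 2 * ‖x (n + 1) - x n‖ ^ 2 +
          2 * lam (n + 1) ^ 2 * ⟪f' (x (n + 1)), f' (x n)⟫ := by
        rw [h.norm_succ_sub_sq (n + 1)]
        exact three_halves_mul_sq_norm_le h₁.le (h.two_mul_lam_mul_norm_gradient_sub_le n)
    _ = 1 / 2 * ‖x (n + 1) - x n‖ ^ 2 + 2 * (lam (n + 1) * (lam (n + 1) / lam n)) *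
          (lam n * ⟪f' (x (n + 1)), f' (x n)⟫) := by
        field_simp
    _ ≤ _ := by gcongr

end Algorithm

section RateConstants

variable {mu L l l₁ l₂ : ℝ}

lemma div_four_mul_le_one_fourth (hmu : 0 < mu) (hmuL : mu ≤ L) : mu / (4 * L) ≤ 1 / 4 := by
  have hL := hmu.trans_le hmuL
  rw [div_le_iff₀ (by positivity)]
  linarith

lemma one_le_rate_mul_one_add (hmu : 0 < mu) (hmuL : mu ≤ L) :
    1 ≤ (1 - mu / (4 * L)) * (1 + 2 * mu / L) := by
  have hL := hmu.trans_le hmuL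
  have hle := div_four_mul_le_one_fourth hmu hmuL
  have hpos : 0 < mu / (4 * L) := by positivity
  have heq : 2 * mu / L = 8 * (mu / (4 * L)) := by ring
  rw [heq]
  nlinarith

lemma div_le_stepsize_ratio (hmu : 0 < mu) (hL : 0 < L) (hl₁ : 1 / (2 * L) ≤ l₁) (hl₂ : 0 < l₂)
    (hl₂' : l₂ ≤ 1 / (2 * mu)) : mu / L ≤ l₁ / l₂ := by
  rw [le_div_iff₀ hl₂]
  calc mu / L * l₂ ≤ mu / L * (1 / (2 * mu)) := by gcongr
    _ = 1 / (2 * L) := by field_simp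
    _ ≤ l₁ := hl₁

lemma mul_ratio_le_rate_mul (hmu : 0 < mu) (hmuL : mu ≤ L) (hl₁ : 0 < l₁)
    (hratio : mu / L ≤ l₁ / l₂) (hl : l ^ 2 ≤ (1 + l₁ / l₂ / 2) * l₁ ^ 2) :
    l * (l / l₁) ≤ (1 - mu / (4 * L)) * (l₁ * (1 + l₁ / l₂)) := by
  have hle := div_four_mul_le_one_fourth hmu hmuL
  have hfactor : 1 + l₁ / l₂ / 2 ≤ (1 - mu / (4 * L)) * (1 + l₁ / l₂) := by
    have heq : mu / L = 4 * (mu / (4 * L)) := by ring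
    have hpos : 0 < mu / (4 * L) := by
      have hL := hmu.trans_le hmuL
      positivity
    nlinarith
  calc l * (l / l₁) = l ^ 2 / l₁ := by ring
    _ ≤ (1 + l₁ / l₂ / 2) * l₁ := by
        rw [div_le_iff₀ hl₁]
        linarith
    _ ≤ (1 - mu / (4 * L)) * (1 + l₁ / l₂) * l₁ := by gcongr
    _ = (1 - mu / (4 * L)) * (l₁ * (1 + l₁ / l₂)) := by ring

end RateConstants

/-- `f` is `mu`-strongly convex with the `L`-Lipschitz gradient `f'`, where `0 < mu ≤ L`. Strong
convexity is the first-order inequality in terms of `f'`. -/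
structure IsSmoothStronglyConvex {E : Type*} [NormedAddCommGroup E] [InnerProductSpace ℝ E]
    [CompleteSpace E] (f : E → ℝ) (f' : E → E) (mu L : ℝ) : Prop where
  mu_pos : 0 < mu
  mu_le : mu ≤ L
  hasGradientAt : ∀ x, HasGradientAt f (f' x) x
  strongConvex : ∀ x y, f x + ⟪f' x, y - x⟫ + mu / 2 * ‖y - x‖ ^ 2 ≤ f y
  lipschitz : ∀ x y, ‖f' x - f' y‖ ≤ L * ‖x - y‖

/-- The energy of the iterates, where `adgdEnergy f xstar x lam mu L n` is `Ψ^{n+2}` in the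
notation of `adgdPsi`: the shift avoids the truncated indices `k - 1` and `k - 2`. -/
noncomputable def adgdEnergy {E : Type*} [NormedAddCommGroup E] (f : E → ℝ) (xstar : E)
    (x : ℕ → E) (lam : ℕ → ℝ) (mu L : ℝ) (n : ℕ) : ℝ :=
  ‖x (n + 2) - xstar‖ ^ 2 + (1 / 2) * (1 + 2 * mu / L) * ‖x (n + 2) - x (n + 1)‖ ^ 2
    + 2 * lam (n + 1) * (1 + lam (n + 1) / lam n) * (f (x (n + 1)) - f xstar)

lemma norm_sub_sq_le_adgdEnergy {E : Type*} [NormedAddCommGroup E] {f : E → ℝ} {xstar : E}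
    {x : ℕ → E} {lam : ℕ → ℝ} {mu L : ℝ} (hmu : 0 ≤ mu) (hL : 0 ≤ L)
    (hmin : ∀ y, f xstar ≤ f y) (hlam : ∀ n, 0 < lam n) (n : ℕ) :
    ‖x (n + 2) - xstar‖ ^ 2 ≤ adgdEnergy f xstar x lam mu L n := by
  have hgap := sub_nonneg.2 (hmin (x (n + 1)))
  have h₀ := hlam n
  have h₁ := hlam (n + 1)
  rw [adgdEnergy, add_assoc]
  exact le_add_of_nonneg_right (by positivity)

namespace IsSmoothStronglyConvex

variable {E : Type*} [NormedAddCommGroup E] [InnerProductSpace ℝ E] [CompleteSpace E]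
  {f : E → ℝ} {f' : E → E} {mu L : ℝ} {xstar : E} {x : ℕ → E} {lam : ℕ → ℝ}

lemma L_pos (hf : IsSmoothStronglyConvex f f' mu L) : 0 < L :=
  hf.mu_pos.trans_le hf.mu_le

lemma convex (hf : IsSmoothStronglyConvex f f' mu L) (x y : E) : f x + ⟪f' x, y - x⟫ ≤ f y :=
  add_inner_le_of_strongConvex hf.mu_pos.le hf.strongConvex x y

lemma injective (hf : IsSmoothStronglyConvex f f' mu L) : Function.Injective f' :=
  injective_of_strongConvex hf.mu_pos hf.strongConvex

lemma gradient_eq_zero (hf : IsSmoothStronglyConvex f f' mu L) (hmin : ∀ y, f xstar ≤ f y) :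
    f' xstar = 0 :=
  eq_zero_of_isLocalMin_of_hasGradientAt (Filter.Eventually.of_forall hmin)
    (hf.hasGradientAt xstar)

lemma gradient_eq_zero_iff (hf : IsSmoothStronglyConvex f f' mu L) (hmin : ∀ y, f xstar ≤ f y)
    {y : E} : f' y = 0 ↔ y = xstar := by
  rw [← hf.gradient_eq_zero hmin, hf.injective.eq_iff]

lemma le_two_mul_inner_gradient (hf : IsSmoothStronglyConvex f f' mu L) (hmin : ∀ y, f xstar ≤ f y)
    (y : E) :
    2 * (f y - f xstar) + mu / 2 * ‖y - xstar‖ ^ 2 + ‖f' y‖ ^ 2 / (2 * L) ≤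
      2 * ⟪f' y, y - xstar⟫ := by
  have hstrong := hf.strongConvex y xstar
  have hcoco := add_inner_add_sq_norm_sub_le_of_lipschitz_gradient hf.L_pos hf.hasGradientAt
    hf.convex hf.lipschitz y xstar
  rw [← neg_sub y xstar, inner_neg_right] at hstrong hcoco
  rw [norm_neg] at hstrong
  rw [hf.gradient_eq_zero hmin, zero_sub, norm_neg] at hcoco
  linarith

lemma norm_gradient_step_sub_sq_le (hf : IsSmoothStronglyConvex f f' mu L)
    (hmin : ∀ y, f xstar ≤ f y) {l : ℝ} (hl : 1 / (2 * L) ≤ l) (hl' : l ≤ 1 / (2 * mu)) (y : E) :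
    ‖y - l • f' y - xstar‖ ^ 2 + mu / L * (l ^ 2 * ‖f' y‖ ^ 2) ≤
      (1 - mu / (4 * L)) * ‖y - xstar‖ ^ 2 - 2 * l * (f y - f xstar) + l ^ 2 * ‖f' y‖ ^ 2 := by
  have hmu := hf.mu_pos
  have hL := hf.L_pos
  have hl0 : 0 < l := lt_of_lt_of_le (by positivity) hl
  have hexpand : ‖y - l • f' y - xstar‖ ^ 2 =
      ‖y - xstar‖ ^ 2 - l * (2 * ⟪f' y, y - xstar⟫) + l ^ 2 * ‖f' y‖ ^ 2 := by
    rw [sub_right_comm, norm_sub_sq_real, real_inner_smul_right, real_inner_comm, norm_smul,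
      mul_pow, Real.norm_eq_abs, sq_abs]
    ring
  have hinner := mul_le_mul_of_nonneg_left (hf.le_two_mul_inner_gradient hmin y) hl0.le
  have hdist : mu / (4 * L) * ‖y - xstar‖ ^ 2 ≤ l * (mu / 2 * ‖y - xstar‖ ^ 2) :=
    calc mu / (4 * L) * ‖y - xstar‖ ^ 2 = 1 / (2 * L) * (mu / 2 * ‖y - xstar‖ ^ 2) := by
          ring
      _ ≤ l * (mu / 2 * ‖y - xstar‖ ^ 2) := by gcongr
  have hgrad : mu / L * (l ^ 2 * ‖f' y‖ ^ 2) ≤ l * (‖f' y‖ ^ 2 / (2 * L)) :=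
    calc mu / L * (l ^ 2 * ‖f' y‖ ^ 2) = l * (mu / L * ‖f' y‖ ^ 2) * l := by ring
      _ ≤ l * (mu / L * ‖f' y‖ ^ 2) * (1 / (2 * mu)) := by gcongr
      _ = l * (‖f' y‖ ^ 2 / (2 * L)) := by field_simp
  linarith

lemma succ_eq_minimizer (hf : IsSmoothStronglyConvex f f' mu L) (hmin : ∀ y, f xstar ≤ f y)
    (h : IsAdaptiveGradientDescent f' x lam) {n : ℕ} (hn : x n = xstar) : x (n + 1) = xstar :=
  (h.succ_eq_of_gradient_eq_zero ((hf.gradient_eq_zero_iff hmin).2 hn)).trans hn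

lemma gradient_succ_ne (hf : IsSmoothStronglyConvex f f' mu L) (hmin : ∀ y, f xstar ≤ f y)
    (h : IsAdaptiveGradientDescent f' x lam) {n : ℕ} (hlam : 0 < lam n) (hn : x n ≠ xstar) :
    f' (x (n + 1)) ≠ f' (x n) := fun heq =>
  hn ((hf.gradient_eq_zero_iff hmin).1 (h.gradient_eq_zero_of_succ_eq hlam (hf.injective heq)))

lemma lam_succ_le (hf : IsSmoothStronglyConvex f f' mu L) (hmin : ∀ y, f xstar ≤ f y)
    (h : IsAdaptiveGradientDescent f' x lam) {n : ℕ} (hlam : 0 < lam n) (hn : x n ≠ xstar) :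
    lam (n + 1) ≤ 1 / (2 * mu) :=
  (h.lam_succ_le_localStepsize (hf.gradient_succ_ne hmin h hlam hn)).trans
    (localStepsize_le_one_div_two_mul hf.mu_pos
      (mul_norm_sub_le_norm_sub_of_strongConvex hf.strongConvex _ _))

lemma adgdEnergy_succ_le_of_lam_le (hf : IsSmoothStronglyConvex f f' mu L)
    (hmin : ∀ y, f xstar ≤ f y) (h : IsAdaptiveGradientDescent f' x lam)
    (hlam : ∀ n, 0 < lam n) (hlow : ∀ n, 1 / (2 * L) ≤ lam (n + 1)) {n : ℕ}
    (hn : lam n ≤ 1 / (2 * mu)) (hn₂ : lam (n + 2) ≤ 1 / (2 * mu)) :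
    adgdEnergy f xstar x lam mu L (n + 1) ≤
      (1 - mu / (4 * L)) * adgdEnergy f xstar x lam mu L n := by
  have hdist := hf.norm_gradient_step_sub_sq_le hmin (hlow (n + 1)) hn₂ (x (n + 2))
  rw [← h.update, ← h.norm_succ_sub_sq] at hdist
  have hdisp := h.three_halves_mul_norm_succ_sub_sq_le hlam hf.convex (n + 1)
  have hprev : ‖x (n + 2) - x (n + 1)‖ ^ 2 ≤
      (1 - mu / (4 * L)) * (1 + 2 * mu / L) * ‖x (n + 2) - x (n + 1)‖ ^ 2 :=
    le_mul_of_one_le_left (sq_nonneg _) (one_le_rate_mul_one_add hf.mu_pos hf.mu_le)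
  have hgap := mul_le_mul_of_nonneg_right
    (mul_ratio_le_rate_mul hf.mu_pos hf.mu_le (hlam (n + 1))
      (div_le_stepsize_ratio hf.mu_pos hf.L_pos (hlow n) (hlam n) hn) (h.lam_add_two_sq_le hlam n))
    (sub_nonneg.2 (hmin (x (n + 1))))
  simp only [adgdEnergy, mul_div_assoc, Nat.add_assoc, Nat.reduceAdd] at hdist hdisp hprev ⊢
  linarith

lemma adgdEnergy_succ_le (hf : IsSmoothStronglyConvex f f' mu L) (hmin : ∀ y, f xstar ≤ f y)
    (h : IsAdaptiveGradientDescent f' x lam) (hlam : ∀ n, 0 < lam n)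
    (hlow : ∀ n, 1 / (2 * L) ≤ lam (n + 1)) (n : ℕ) :
    adgdEnergy f xstar x lam mu L (n + 2) ≤
      (1 - mu / (4 * L)) * adgdEnergy f xstar x lam mu L (n + 1) := by
  by_cases hx₂ : x (n + 2) = xstar
  · have hx₃ := hf.succ_eq_minimizer hmin h hx₂
    have hx₄ := hf.succ_eq_minimizer hmin h hx₃
    have hzero : adgdEnergy f xstar x lam mu L (n + 2) = 0 := by simp [adgdEnergy, hx₃, hx₄]
    have hrate := div_four_mul_le_one_fourth hf.mu_pos hf.mu_le
    rw [hzero]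
    exact mul_nonneg (by linarith) ((sq_nonneg _).trans
      (norm_sub_sq_le_adgdEnergy hf.mu_pos.le hf.L_pos.le hmin hlam (n + 1)))
  · have hx₁ : x (n + 1) ≠ xstar := mt (hf.succ_eq_minimizer hmin h) hx₂
    have hx₀ : x n ≠ xstar := mt (hf.succ_eq_minimizer hmin h) hx₁
    exact hf.adgdEnergy_succ_le_of_lam_le hmin h hlam hlow
      (hf.lam_succ_le hmin h (hlam n) hx₀) (hf.lam_succ_le hmin h (hlam (n + 2)) hx₂)

end IsSmoothStronglyConvex

theorem adgd_linear_rate_general {E : Type*} [NormedAddCommGroup E] [InnerProductSpace ℝ E]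
    [CompleteSpace E] {f : E → ℝ} {f' : E → E} {mu L : ℝ}
    (hf : IsSmoothStronglyConvex f f' mu L) {xstar : E} (hmin : ∀ y, f xstar ≤ f y)
    {x : ℕ → E} {lam : ℕ → ℝ} (hx0 : x 0 ≠ xstar) (h : IsAdaptiveGradientDescent f' x lam)
    (n : ℕ) :
    ‖x (n + 3) - xstar‖ ^ 2 ≤ adgdEnergy f xstar x lam mu L (n + 1) ∧
      adgdEnergy f xstar x lam mu L (n + 1) ≤
        (1 - mu / (4 * L)) ^ n * adgdEnergy f xstar x lam mu L 1 := by
  have hbounds := h.lam_pos_and_one_div_le_lam_succ hf.L_pos hf.lipschitz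
    (hf.gradient_succ_ne hmin h h.lam_zero_pos hx0)
  have hlam (k : ℕ) := (hbounds k).1
  have hlow (k : ℕ) := (hbounds k).2
  refine ⟨norm_sub_sq_le_adgdEnergy hf.mu_pos.le hf.L_pos.le hmin hlam (n + 1), ?_⟩
  induction n with
  | zero => simp
  | succ n ih =>
    have hrate := div_four_mul_le_one_fourth hf.mu_pos hf.mu_le
    calc adgdEnergy f xstar x lam mu L (n + 2)
        ≤ (1 - mu / (4 * L)) * adgdEnergy f xstar x lam mu L (n + 1) :=
          hf.adgdEnergy_succ_le hmin h hlam hlow n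
      _ ≤ (1 - mu / (4 * L)) * ((1 - mu / (4 * L)) ^ n * adgdEnergy f xstar x lam mu L 1) :=
          mul_le_mul_of_nonneg_left ih (by linarith)
      _ = (1 - mu / (4 * L)) ^ (n + 1) * adgdEnergy f xstar x lam mu L 1 := by ring

/-- Theorem 3 of "Adaptive gradient descent without descent": linear convergence of the
modified adaptive gradient descent for a strongly convex smooth function. -/
theorem adgd_linear_rate {d : ℕ}
    (f : EuclideanSpace ℝ (Fin d) → ℝ)
    (f' : EuclideanSpace ℝ (Fin d) → EuclideanSpace ℝ (Fin d))
    (hdiff : ∀ x, HasGradientAt f (f' x) x)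
    (mu L : ℝ) (hmu : 0 < mu) (hmuL : mu ≤ L)
    (hsc : ∀ x y, f x + ⟪f' x, y - x⟫ + mu / 2 * ‖y - x‖ ^ 2 ≤ f y)
    (hLip : ∀ x y, ‖f' x - f' y‖ ≤ L * ‖x - y‖)
    (xstar : EuclideanSpace ℝ (Fin d)) (hmin : ∀ y, f xstar ≤ f y)
    (x : ℕ → EuclideanSpace ℝ (Fin d)) (lam : ℕ → ℝ)
    (hx0 : x 0 ≠ xstar) (hl0 : 0 < lam 0)
    (hupd : ∀ k, x (k + 1) = x k - lam k • f' (x k))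
    (hl1 : lam 1 = ‖x 1 - x 0‖ / (2 * ‖f' (x 1) - f' (x 0)‖))
    (hrec : ∀ k, 2 ≤ k →
      (f' (x k) ≠ f' (x (k - 1)) →
        lam k = min (Real.sqrt (1 + (lam (k - 1) / lam (k - 2)) / 2) * lam (k - 1))
          (‖x k - x (k - 1)‖ / (2 * ‖f' (x k) - f' (x (k - 1))‖))) ∧
      (f' (x k) = f' (x (k - 1)) →
        lam k = Real.sqrt (1 + (lam (k - 1) / lam (k - 2)) / 2) * lam (k - 1))) :
    ∀ k, 3 ≤ k →
      ‖x (k + 1) - xstar‖ ^ 2 ≤ adgdPsi f xstar x lam mu L (k + 1) ∧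
      adgdPsi f xstar x lam mu L (k + 1) ≤
        (1 - mu / (4 * L)) ^ (k - 2) * adgdPsi f xstar x lam mu L 3 := by
  intro k hk
  obtain ⟨n, rfl⟩ := Nat.exists_eq_add_of_le' hk
  exact adgd_linear_rate_general ⟨hmu, hmuL, hdiff, hsc, hLip⟩ hmin hx0
    ⟨hl0, hupd, hl1, fun n => (hrec (n + 2) le_add_self).1,
      fun n => (hrec (n + 2) le_add_self).2⟩ (n + 1)
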